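/- Let 0 < r < 1 and T = {-1, 1}^n ⊂ ℝ^n. Then for all sufficiently large n, γ_r(T, d_∞) > 2^{1 - 1/r} · n^{(r+1)/(2r)}. -/

import Mathlib

/-!
Since `(r+1)/(2r) < 1/r`, it suffices to show `γ_r ≥ 2^(1 - 1/r) · n^(1/r)`. Choose `m` with
`2^m < n ≤ 2^(m+1)`. The partition `A m` has at most `2^(2^m) < 2^n` members, so by pigeonhole
one of them contains two distinct points of the cube, and hence has diameter at least `2`
(`exists_two_le_diamD`). The `m`-th term of the sum alone is then at least
`2 · 2^(m/r) ≥ 2 · (n/2)^(1/r)`.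

The infimum defining `gammaD` is a real `sInf`, which would be `0` on the empty set, so one
also needs an admissible sequence with bounded sums: the trivial partition up to index `n`,
followed by singletons (`cube_bounds_nonempty`).
-/

open MeasureTheory ProbabilityTheory

/-- `P` is a partition of `T`: members are nonempty subsets of `T` and every point of `T`
lies in exactly one member. -/
def IsPartitionOf {α : Type*} (T : Set α) (P : Set (Set α)) : Prop :=
  (∀ B ∈ P, B ⊆ T) ∧ (∀ t ∈ T, ∃! B, B ∈ P ∧ t ∈ B) ∧ ∅ ∉ P

/-- An admissible sequence of partitions of `T`: increasing, `A 0 = {T}`, `|A n| ≤ 2^(2^n)`. -/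
def IsAdmissibleSeq {α : Type*} (T : Set α) (A : ℕ → Set (Set α)) : Prop :=
  A 0 = {T} ∧
  (∀ n, IsPartitionOf T (A n)) ∧
  (∀ n, ∀ B ∈ A (n + 1), ∃ C ∈ A n, B ⊆ C) ∧
  (∀ n, (A n).Finite ∧ (A n).ncard ≤ 2 ^ 2 ^ n)

/-- The cell of the partition `P` containing `t` (the union of all members containing `t`;
for a partition this is the unique such member). -/
def cellOf {α : Type*} (P : Set (Set α)) (t : α) : Set α :=
  ⋃₀ {B | B ∈ P ∧ t ∈ B}

/-- Diameter of a set with respect to a distance function `d`. -/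
noncomputable def diamD {α : Type*} (d : α → α → ℝ) (S : Set α) : ℝ :=
  sSup ((fun p : α × α => d p.1 p.2) '' (S ×ˢ S))

/-- Talagrand's functional `γ_β(T, d)`: the infimum over admissible sequences of partitions
of `sup_{t ∈ T} Σ_{n ≥ 0} 2^(n/β) Δ_d(A_n(t))`. -/
noncomputable def gammaD {α : Type*} (β : ℝ) (T : Set α) (d : α → α → ℝ) : ℝ :=
  sInf { c : ℝ | ∃ A : ℕ → Set (Set α), IsAdmissibleSeq T A ∧
    ∀ t ∈ T, ∀ N : ℕ,
      ∑ n ∈ Finset.range N, (2 : ℝ) ^ ((n : ℝ) / β) * diamD d (cellOf (A n) t) ≤ c }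

/-- The Euclidean metric on `ℝⁿ`. -/
noncomputable def d2 {n : ℕ} (s t : Fin n → ℝ) : ℝ := Real.sqrt (∑ k, (s k - t k) ^ 2)

/-- The supremum metric on `ℝⁿ`. -/
noncomputable def dinf {n : ℕ} (s t : Fin n → ℝ) : ℝ := ⨆ k, |s k - t k|

/-- The discrete cube `{-1, 1}^n`. -/
abbrev cube (n : ℕ) : Set (Fin n → ℝ) := {t | ∀ k, t k = 1 ∨ t k = -1}

lemma cube_eq (n : ℕ) :
    cube n = ↑(Fintype.piFinset fun _ : Fin n => ({1, -1} : Finset ℝ)) := by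
  ext t
  simp

lemma cube_finite (n : ℕ) : (cube n).Finite := by
  rw [cube_eq]
  exact Finset.finite_toSet _

lemma cube_ncard (n : ℕ) : (cube n).ncard = 2 ^ n := by
  rw [cube_eq, Set.ncard_coe_finset, Fintype.card_piFinset_const, Finset.card_pair (by norm_num)]

lemma cube_nonempty (n : ℕ) : (cube n).Nonempty := ⟨fun _ => 1, fun _ => Or.inl rfl⟩

lemma dinf_nonneg {n : ℕ} (s t : Fin n → ℝ) : 0 ≤ dinf s t :=
  Real.iSup_nonneg fun _ => abs_nonneg _

lemma dinf_self {n : ℕ} (t : Fin n → ℝ) : dinf t t = 0 := by simp [dinf]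

lemma two_le_dinf {n : ℕ} {s t : Fin n → ℝ} (hs : s ∈ cube n) (ht : t ∈ cube n)
    (h : s ≠ t) : 2 ≤ dinf s t := by
  obtain ⟨k, hk⟩ := Function.ne_iff.mp h
  have h2 : |s k - t k| = 2 := by
    rcases hs k with a | a <;> rcases ht k with b | b <;>
      simp only [a, b, ne_eq, not_true_eq_false] at hk ⊢ <;> norm_num
  rw [← h2]
  exact le_ciSup (f := fun k => |s k - t k|) (Set.finite_range _).bddAbove k

lemma diamD_nonneg {n : ℕ} (S : Set (Fin n → ℝ)) : 0 ≤ diamD dinf S := by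
  apply Real.sSup_nonneg
  rintro _ ⟨p, -, rfl⟩
  exact dinf_nonneg _ _

lemma diamD_singleton {n : ℕ} (t : Fin n → ℝ) : diamD dinf {t} = 0 := by
  simp [diamD, dinf_self]

lemma mem_cellOf {α : Type*} {T : Set α} {P : Set (Set α)} (hP : IsPartitionOf T P) {t : α}
    (ht : t ∈ T) : t ∈ cellOf P t := by
  obtain ⟨B, hB, -⟩ := hP.2.1 t ht
  exact ⟨B, hB, hB.2⟩

lemma cellOf_eq {α : Type*} {T : Set α} {P : Set (Set α)} (hP : IsPartitionOf T P) {t : α}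
    (ht : t ∈ T) {B : Set α} (hB : B ∈ P) (htB : t ∈ B) : cellOf P t = B := by
  have : {C | C ∈ P ∧ t ∈ C} = {B} := by
    ext C
    exact ⟨fun hC => (hP.2.1 t ht).unique hC ⟨hB, htB⟩, by rintro rfl; exact ⟨hB, htB⟩⟩
  rw [cellOf, this, Set.sUnion_singleton]

lemma cellOf_mem {α : Type*} {T : Set α} {P : Set (Set α)} (hP : IsPartitionOf T P) {t : α}
    (ht : t ∈ T) : cellOf P t ∈ P := by
  obtain ⟨B, hB, -⟩ := hP.2.1 t ht
  rw [cellOf_eq hP ht hB.1 hB.2]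
  exact hB.1

/-- Pigeonhole: a partition of the cube into fewer than `2^n` members has a member containing
two distinct points, which are at distance `2`. -/
lemma exists_two_le_diamD {n : ℕ} {P : Set (Set (Fin n → ℝ))} (hP : IsPartitionOf (cube n) P)
    (hfin : P.Finite) (hcard : P.ncard < 2 ^ n) :
    ∃ t ∈ cube n, 2 ≤ diamD dinf (cellOf P t) := by
  obtain ⟨s, hs, t, ht, hst, heq⟩ := Set.exists_ne_map_eq_of_ncard_lt_of_maps_to
    (s := cube n) (t := P) (by rwa [cube_ncard]) (f := cellOf P)
    (fun t ht => cellOf_mem hP ht) hfin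
  refine ⟨t, ht, (two_le_dinf hs ht hst).trans ?_⟩
  have hsub : cellOf P t ⊆ cube n := hP.1 _ (cellOf_mem hP ht)
  have hcf : (cellOf P t).Finite := (cube_finite n).subset hsub
  exact le_csSup ((hcf.prod hcf).image _).bddAbove
    ⟨(s, t), ⟨heq ▸ mem_cellOf hP hs, mem_cellOf hP ht⟩, rfl⟩

lemma isPartitionOf_self {α : Type*} {T : Set α} (hT : T.Nonempty) : IsPartitionOf T {T} := by
  refine ⟨by rintro B rfl; exact subset_rfl, fun t ht => ⟨T, ⟨rfl, ht⟩, fun B hB => hB.1⟩, ?_⟩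
  intro h
  exact hT.ne_empty (Set.mem_singleton_iff.mp h).symm

lemma isPartitionOf_singletons {α : Type*} (T : Set α) :
    IsPartitionOf T ((fun t => ({t} : Set α)) '' T) := by
  refine ⟨?_, fun t ht => ⟨{t}, ⟨⟨t, ht, rfl⟩, rfl⟩, ?_⟩, ?_⟩
  · rintro _ ⟨t, ht, rfl⟩
    exact Set.singleton_subset_iff.mpr ht
  · rintro _ ⟨⟨s, -, rfl⟩, hs⟩
    rw [Set.mem_singleton_iff.mp hs]
  · rintro ⟨t, -, h⟩
    exact Set.singleton_ne_empty t h

/-- The trivial partition of the cube at indices below `n`, and the partition into singletons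
from `n` on. The test `k = 0` only matters for `n = 0`, where the cube is a single point and the
two partitions coincide; it makes `cubeSeq n 0 = {cube n}` hold without a case distinction. -/
def cubeSeq (n k : ℕ) : Set (Set (Fin n → ℝ)) :=
  if k = 0 ∨ k < n then {cube n} else (fun t => ({t} : Set (Fin n → ℝ))) '' cube n

lemma cubeSeq_isPartitionOf (n k : ℕ) : IsPartitionOf (cube n) (cubeSeq n k) := by
  unfold cubeSeq
  split_ifs
  · exact isPartitionOf_self (cube_nonempty n)
  · exact isPartitionOf_singletons _

lemma cubeSeq_admissible (n : ℕ) : IsAdmissibleSeq (cube n) (cubeSeq n) := by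
  refine ⟨by simp [cubeSeq], cubeSeq_isPartitionOf n, fun k B hB => ?_, fun k => ?_⟩
  · by_cases hk : k = 0 ∨ k < n
    · exact ⟨cube n, by simp [cubeSeq, hk], (cubeSeq_isPartitionOf n (k + 1)).1 B hB⟩
    · refine ⟨B, ?_, subset_rfl⟩
      have hk' : ¬ (k + 1 = 0 ∨ k + 1 < n) := by omega
      rw [cubeSeq, if_neg hk'] at hB
      rwa [cubeSeq, if_neg hk]
  · unfold cubeSeq
    split_ifs with hk
    · exact ⟨Set.finite_singleton _, by rw [Set.ncard_singleton]; exact Nat.one_le_two_pow⟩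
    · refine ⟨(cube_finite n).image _, (Set.ncard_image_le (cube_finite n)).trans ?_⟩
      rw [cube_ncard]
      have : k < 2 ^ k := Nat.lt_two_pow_self
      exact Nat.pow_le_pow_right (by norm_num) (by omega)

/-- The set whose infimum is `gammaD r (cube n) dinf` is nonempty. -/
lemma cube_bounds_nonempty (r : ℝ) (n : ℕ) :
    { c : ℝ | ∃ A : ℕ → Set (Set (Fin n → ℝ)), IsAdmissibleSeq (cube n) A ∧
      ∀ t ∈ cube n, ∀ N : ℕ,
        ∑ k ∈ Finset.range N, (2 : ℝ) ^ ((k : ℝ) / r) * diamD dinf (cellOf (A k) t) ≤ c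
      }.Nonempty := by
  refine ⟨∑ k ∈ Finset.range (n + 1), (2 : ℝ) ^ ((k : ℝ) / r) * diamD dinf (cube n),
    cubeSeq n, cubeSeq_admissible n, fun t ht N => ?_⟩
  have hnn : ∀ k : ℕ, 0 ≤ (2 : ℝ) ^ ((k : ℝ) / r) * diamD dinf (cube n) :=
    fun k => mul_nonneg (by positivity) (diamD_nonneg _)
  have key : ∀ k : ℕ, (2 : ℝ) ^ ((k : ℝ) / r) * diamD dinf (cellOf (cubeSeq n k) t) ≤
      if k ∈ Finset.range (n + 1) then (2 : ℝ) ^ ((k : ℝ) / r) * diamD dinf (cube n) else 0 := by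
    intro k
    by_cases hk : k = 0 ∨ k < n
    · rw [cellOf_eq (cubeSeq_isPartitionOf n k) ht (B := cube n) (by simp [cubeSeq, hk]) ht,
        if_pos (by rw [Finset.mem_range]; omega)]
    · rw [cellOf_eq (cubeSeq_isPartitionOf n k) ht (B := {t})
        (by rw [cubeSeq, if_neg hk]; exact ⟨t, ht, rfl⟩) rfl, diamD_singleton, mul_zero]
      split_ifs
      · exact hnn k
      · exact le_rfl
  refine (Finset.sum_le_sum fun k _ => key k).trans ?_
  rw [← Finset.sum_filter]
  refine Finset.sum_le_sum_of_subset_of_nonneg ?_ fun k _ _ => hnn k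
  intro k hk
  exact (Finset.mem_filter.mp hk).2

/-- For `0 < r < 1` and `T = {-1,1}^n`, for all sufficiently large `n` one has
`γ_r(T, d_∞) > 2^(1 - 1/r) · n^((r+1)/(2r))`. -/
theorem gamma_r_cube_lower_bound
    (r : ℝ) (hr0 : 0 < r) (hr1 : r < 1) :
    ∃ N : ℕ, ∀ n : ℕ, N ≤ n →
      (2 : ℝ) ^ (1 - 1 / r) * (n : ℝ) ^ ((r + 1) / (2 * r)) <
        gammaD r {t : Fin n → ℝ | ∀ k, t k = 1 ∨ t k = -1} dinf := by
  refine ⟨2, fun n hn => ?_⟩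
  have hn1 : (1 : ℝ) < n := by exact_mod_cast hn
  have hexp : (r + 1) / (2 * r) < 1 / r := by
    rw [div_lt_div_iff₀ (by positivity) hr0]
    nlinarith
  refine (mul_lt_mul_of_pos_left (Real.rpow_lt_rpow_of_exponent_lt hn1 hexp)
    (by positivity)).trans_le ?_
  refine le_csInf (cube_bounds_nonempty r n) ?_
  rintro c ⟨A, ⟨-, hpart, -, hcard⟩, hc⟩
  obtain ⟨m, hm1, hm2⟩ : ∃ m : ℕ, 2 ^ m < n ∧ n ≤ 2 ^ (m + 1) := by
    refine ⟨Nat.log 2 (n - 1), ?_, ?_⟩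
    · have := Nat.pow_log_le_self 2 (x := n - 1) (by omega)
      omega
    · have := Nat.lt_pow_succ_log_self (b := 2) (by norm_num) (n - 1)
      simp only [Nat.succ_eq_add_one] at this
      omega
  obtain ⟨t, ht, hdiam⟩ := exists_two_le_diamD (hpart m) (hcard m).1
    ((hcard m).2.trans_lt (Nat.pow_lt_pow_right (by norm_num) hm1))
  have hterm : (2 : ℝ) ^ ((m : ℝ) / r) * diamD dinf (cellOf (A m) t) ≤ c :=
    (Finset.single_le_sum
      (f := fun k : ℕ => (2 : ℝ) ^ ((k : ℝ) / r) * diamD dinf (cellOf (A k) t))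
      (fun k _ => mul_nonneg (by positivity) (diamD_nonneg _))
      (Finset.self_mem_range_succ m)).trans (hc t ht (m + 1))
  have hpow : (n : ℝ) ^ (1 / r) ≤ (2 : ℝ) ^ ((m : ℝ) / r) * 2 ^ (1 / r) := by
    have h : (n : ℝ) ≤ (2 : ℝ) ^ ((m : ℝ) + 1) := by
      rw [← Nat.cast_add_one, Real.rpow_natCast]
      exact_mod_cast hm2
    calc (n : ℝ) ^ (1 / r) ≤ ((2 : ℝ) ^ ((m : ℝ) + 1)) ^ (1 / r) :=
          Real.rpow_le_rpow (by positivity) h (by positivity)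
      _ = (2 : ℝ) ^ ((m : ℝ) / r) * 2 ^ (1 / r) := by
          rw [← Real.rpow_mul (by norm_num), ← Real.rpow_add (by norm_num)]
          congr 1
          ring
  calc (2 : ℝ) ^ (1 - 1 / r) * (n : ℝ) ^ (1 / r)
      ≤ (2 : ℝ) ^ (1 - 1 / r) * ((2 : ℝ) ^ ((m : ℝ) / r) * 2 ^ (1 / r)) := by gcongr
    _ = (2 : ℝ) ^ ((m : ℝ) / r) * 2 := by
        rw [Real.rpow_sub (by norm_num), Real.rpow_one]
        field_simp
    _ ≤ (2 : ℝ) ^ ((m : ℝ) / r) * diamD dinf (cellOf (A m) t) := by gcongr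
    _ ≤ c := hterm
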